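/- In the hypercube-center graph G_S, a left-half center X_{x_1,x_2,x_3} and an edge center E_{v_i,v_j,v_k} are adjacent if and only if v_ℓ = x_ℓ for every ℓ ∈ {1,2,3} ∩ {i,j,k}. -/

import Mathlib

open scoped Classical

/-- A vertex of the 6-partite 3-uniform hypergraph: a part `ℓ ∈ Fin 6` together with a
value in `[n]` (represented by `Fin n`). -/
abbrev HypVert (n : ℕ) := Fin 6 × Fin n

/-- The value `v/(n+1)` associated to a vertex value `v ∈ [n]` (here `v : Fin n` represents
the value `v+1 ∈ [n]`). -/
noncomputable def hval (n : ℕ) (v : Fin n) : ℝ := ((v : ℕ) + 1) / ((n : ℝ) + 1)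

/-- The set of parts met by a set of hypergraph vertices. -/
def hparts {n : ℕ} (e : Finset (HypVert n)) : Finset (Fin 6) := e.image Prod.fst

/-- The hyperedge set is well-formed: every hyperedge consists of `3` vertices lying in
three pairwise distinct parts. -/
def WellFormed {n : ℕ} (E : Set (Finset (HypVert n))) : Prop :=
  ∀ e ∈ E, e.card = 3 ∧ (hparts e).card = 3

/-- The vertex triple `{(1, x₁), (2, x₂), (3, x₃)}` (parts `1,2,3`, `0`-based `0,1,2`). -/
def tripleL {n : ℕ} (x : Fin 3 → Fin n) : Finset (HypVert n) :=
  Finset.univ.image fun ℓ : Fin 3 => ((⟨(ℓ : ℕ), by have := ℓ.isLt; omega⟩ : Fin 6), x ℓ)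

/-- The vertex triple `{(4, y₄), (5, y₅), (6, y₆)}` (parts `4,5,6`, `0`-based `3,4,5`). -/
def tripleR {n : ℕ} (y : Fin 3 → Fin n) : Finset (HypVert n) :=
  Finset.univ.image fun ℓ : Fin 3 => ((⟨(ℓ : ℕ) + 3, by have := ℓ.isLt; omega⟩ : Fin 6), y ℓ)

/-- The left-half center `X x`: in the coordinate pair of part `ℓ ∈ {1,2,3}` it equals
`(x_ℓ/(n+1), 1 − x_ℓ/(n+1))`, and it equals `(2,2)` in the coordinate pairs of parts
`4,5,6`.  (The `12` coordinates are indexed by `Fin 6 × Fin 2`: a part and a position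
within its coordinate pair.) -/
noncomputable def Xpt (n : ℕ) (x : Fin 3 → Fin n) : Fin 6 × Fin 2 → ℝ := fun p =>
  if h : (p.1 : ℕ) < 3 then
    (if p.2 = 0 then hval n (x ⟨(p.1 : ℕ), h⟩) else 1 - hval n (x ⟨(p.1 : ℕ), h⟩))
  else 2

/-- The right-half center `Y y`: `(2,2)` in the coordinate pairs of parts `1,2,3` and
`(y_ℓ/(n+1), 1 − y_ℓ/(n+1))` in the coordinate pair of part `ℓ ∈ {4,5,6}`. -/
noncomputable def Ypt (n : ℕ) (y : Fin 3 → Fin n) : Fin 6 × Fin 2 → ℝ := fun p =>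
  if h : 3 ≤ (p.1 : ℕ) then
    (if p.2 = 0 then hval n (y ⟨(p.1 : ℕ) - 3, by have := p.1.isLt; omega⟩)
     else 1 - hval n (y ⟨(p.1 : ℕ) - 3, by have := p.1.isLt; omega⟩))
  else 2

/-- The edge center of a hyperedge `e`: in the coordinate pair of a part `ℓ` met by `e`
(with vertex value `v`) it equals `(1 + v/(n+1), 2 − v/(n+1))`, and it equals `(1,1)` in the
coordinate pairs of all other parts. -/
noncomputable def Ept (n : ℕ) (e : Finset (HypVert n)) : Fin 6 × Fin 2 → ℝ := fun p =>
  if (∃ v : Fin n, (p.1, v) ∈ e) then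
    (if p.2 = 0 then 1 + ∑ v : Fin n, (if (p.1, v) ∈ e then hval n v else 0)
     else 2 - ∑ v : Fin n, (if (p.1, v) ∈ e then hval n v else 0))
  else 1

/-- Vertices of the hypercube-center graph `G_S`: left-half centers for non-hyperedge
triples from `V₁ × V₂ × V₃`, right-half centers for non-hyperedge triples from
`V₄ × V₅ × V₆`, and edge centers for hyperedges whose parts lie neither all in `{1,2,3}`
nor all in `{4,5,6}`. -/
inductive GSVert (n : ℕ) (E : Set (Finset (HypVert n))) : Type where
  | left (x : Fin 3 → Fin n) (h : tripleL x ∉ E)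
  | right (y : Fin 3 → Fin n) (h : tripleR y ∉ E)
  | edge (e : Finset (HypVert n)) (he : e ∈ E)
      (h1 : ¬ hparts e ⊆ ({0, 1, 2} : Finset (Fin 6)))
      (h2 : ¬ hparts e ⊆ ({3, 4, 5} : Finset (Fin 6)))

/-- The center in `ℝ^12` associated to each vertex of `G_S`. -/
noncomputable def gsPos {n : ℕ} {E : Set (Finset (HypVert n))} :
    GSVert n E → (Fin 6 × Fin 2 → ℝ)
  | .left x _ => Xpt n x
  | .right y _ => Ypt n y
  | .edge e _ _ _ => Ept n e

/-- The hypercube-center graph `G_S`: two distinct centers are adjacent iff their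
`ℓ∞`-distance is at most `1` (the distance on `Fin 6 × Fin 2 → ℝ` is the sup-metric), i.e.
iff the closed axis-parallel unit hypercubes around them intersect. -/
noncomputable def gsGraph (n : ℕ) (E : Set (Finset (HypVert n))) :
    SimpleGraph (GSVert n E) :=
  SimpleGraph.fromRel fun u v => dist (gsPos u) (gsPos v) ≤ 1

/-!
A left-half center has all coordinates in `[0, 2]` and an edge center has all coordinates in
`[1, 2]`. In a part missed by the hyperedge the edge center is `(1, 1)`, and in a part `4, 5, 6`
the left-half center is `(2, 2)`, so such a part never separates the two centers by more than `1`.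
In a part `1, 2, 3` met by the hyperedge the coordinate pairs are `(a, 1 - a)` and
`(1 + b, 2 - b)`: the first coordinates force `b ≤ a`, the second force `a ≤ b`.
-/

theorem hval_mem_Ioo {n : ℕ} (v : Fin n) : hval n v ∈ Set.Ioo 0 1 := by
  have hv : ((v : ℕ) : ℝ) < n := by exact_mod_cast v.isLt
  refine ⟨by unfold hval; positivity, ?_⟩
  rw [hval, div_lt_one (by positivity)]
  linarith

theorem hval_injective (n : ℕ) : Function.Injective (hval n) := by
  intro v w h
  have hn : (n : ℝ) + 1 ≠ 0 := by positivity
  rw [hval, hval, div_left_inj' hn] at h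
  exact Fin.ext (by exact_mod_cast add_right_cancel h)

theorem WellFormed.injOn_fst {n : ℕ} {E : Set (Finset (HypVert n))} (hE : WellFormed E)
    {e : Finset (HypVert n)} (he : e ∈ E) : Set.InjOn Prod.fst (e : Set (HypVert n)) :=
  Finset.card_image_iff.mp ((hE e he).2.trans (hE e he).1.symm)

theorem gsGraph_adj_iff {n : ℕ} {E : Set (Finset (HypVert n))} {u v : GSVert n E} :
    (gsGraph n E).Adj u v ↔ u ≠ v ∧ dist (gsPos u) (gsPos v) ≤ 1 := by
  rw [gsGraph, SimpleGraph.fromRel_adj, dist_comm (gsPos v), or_self]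

theorem dist_pair_le_one_iff {a b : ℝ} :
    (dist a (1 + b) ≤ 1 ∧ dist (1 - a) (2 - b) ≤ 1) ↔ a = b := by
  simp only [Real.dist_eq, abs_le]
  constructor
  · rintro ⟨⟨hba, -⟩, ⟨hab, -⟩⟩
    linarith
  · rintro rfl
    norm_num

section Centers

variable {n : ℕ} {x : Fin 3 → Fin n} {e : Finset (HypVert n)} {p : Fin 6}

theorem Xpt_of_lt (hp : (p : ℕ) < 3) (i : Fin 2) :
    Xpt n x (p, i) = if i = 0 then hval n (x ⟨p, hp⟩) else 1 - hval n (x ⟨p, hp⟩) :=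
  dif_pos hp

theorem Xpt_of_not_lt (hp : ¬ (p : ℕ) < 3) (i : Fin 2) : Xpt n x (p, i) = 2 :=
  dif_neg hp

theorem Xpt_mem_Icc (i : Fin 2) : Xpt n x (p, i) ∈ Set.Icc 0 2 := by
  by_cases hp : (p : ℕ) < 3
  · obtain ⟨hpos, hlt⟩ := hval_mem_Ioo (x ⟨p, hp⟩)
    rw [Xpt_of_lt hp]
    split_ifs <;> constructor <;> linarith
  · rw [Xpt_of_not_lt hp]
    norm_num

theorem Ept_of_mem (hinj : Set.InjOn Prod.fst (e : Set (HypVert n))) {v : Fin n}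
    (hv : (p, v) ∈ e) (i : Fin 2) :
    Ept n e (p, i) = if i = 0 then 1 + hval n v else 2 - hval n v := by
  have hunique (w : Fin n) : (p, w) ∈ e ↔ w = v :=
    ⟨fun hw => congrArg Prod.snd (hinj hw hv rfl), fun h => h ▸ hv⟩
  simp only [Ept, hunique, exists_eq, if_true, Finset.sum_ite_eq', Finset.mem_univ]

theorem Ept_of_forall_notMem (h : ∀ v, (p, v) ∉ e) (i : Fin 2) : Ept n e (p, i) = 1 :=
  if_neg (not_exists.mpr h)

theorem Ept_mem_Icc (hinj : Set.InjOn Prod.fst (e : Set (HypVert n))) (i : Fin 2) :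
    Ept n e (p, i) ∈ Set.Icc 1 2 := by
  by_cases hp : ∃ v, (p, v) ∈ e
  · obtain ⟨v, hv⟩ := hp
    obtain ⟨hpos, hlt⟩ := hval_mem_Ioo v
    rw [Ept_of_mem hinj hv]
    split_ifs <;> constructor <;> linarith
  · rw [Ept_of_forall_notMem (not_exists.mp hp)]
    norm_num

theorem dist_Xpt_Ept_le_one_of_not_lt (hinj : Set.InjOn Prod.fst (e : Set (HypVert n)))
    (hp : ¬ (p : ℕ) < 3) (i : Fin 2) : dist (Xpt n x (p, i)) (Ept n e (p, i)) ≤ 1 := by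
  obtain ⟨hle, hge⟩ := Ept_mem_Icc (p := p) hinj i
  rw [Xpt_of_not_lt hp, Real.dist_eq, abs_le]
  constructor <;> linarith

theorem dist_Xpt_Ept_le_one_of_forall_notMem (h : ∀ v, (p, v) ∉ e) (i : Fin 2) :
    dist (Xpt n x (p, i)) (Ept n e (p, i)) ≤ 1 := by
  obtain ⟨hle, hge⟩ := Xpt_mem_Icc (x := x) (p := p) i
  rw [Ept_of_forall_notMem h, Real.dist_eq, abs_le]
  constructor <;> linarith

theorem forall_dist_Xpt_Ept_le_one_iff_eq
    (hinj : Set.InjOn Prod.fst (e : Set (HypVert n))) (hp : (p : ℕ) < 3) {v : Fin n}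
    (hv : (p, v) ∈ e) :
    (∀ i, dist (Xpt n x (p, i)) (Ept n e (p, i)) ≤ 1) ↔ v = x ⟨p, hp⟩ := by
  simp only [Fin.forall_fin_two, Xpt_of_lt hp, Ept_of_mem hinj hv, if_true, one_ne_zero, if_false]
  rw [dist_pair_le_one_iff, (hval_injective n).eq_iff, eq_comm]

theorem dist_Xpt_Ept_le_one_iff (hinj : Set.InjOn Prod.fst (e : Set (HypVert n))) :
    dist (Xpt n x) (Ept n e) ≤ 1 ↔
      ∀ (ℓ : Fin 3) (v : Fin n), ((⟨ℓ, by omega⟩ : Fin 6), v) ∈ e → v = x ℓ := by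
  rw [dist_pi_le_iff zero_le_one, Prod.forall]
  constructor
  · intro h ℓ v hv
    exact (forall_dist_Xpt_Ept_le_one_iff_eq hinj ℓ.isLt hv).mp (h _)
  · intro h p
    by_cases hp : (p : ℕ) < 3
    · by_cases hmeet : ∃ v, (p, v) ∈ e
      · obtain ⟨v, hv⟩ := hmeet
        exact (forall_dist_Xpt_Ept_le_one_iff_eq hinj hp hv).mpr (h ⟨p, hp⟩ v hv)
      · exact dist_Xpt_Ept_le_one_of_forall_notMem (not_exists.mp hmeet)
    · exact dist_Xpt_Ept_le_one_of_not_lt hinj hp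

end Centers

theorem gsGraph_equality_check_general {n : ℕ} {E : Set (Finset (HypVert n))}
    {x : Fin 3 → Fin n} (hx : tripleL x ∉ E) {e : Finset (HypVert n)} (he : e ∈ E)
    (hinj : Set.InjOn Prod.fst (e : Set (HypVert n)))
    (h1 : ¬ hparts e ⊆ ({0, 1, 2} : Finset (Fin 6)))
    (h2 : ¬ hparts e ⊆ ({3, 4, 5} : Finset (Fin 6))) :
    (gsGraph n E).Adj (GSVert.left x hx) (GSVert.edge e he h1 h2) ↔
      ∀ (ℓ : Fin 3) (v : Fin n), ((⟨ℓ, by omega⟩ : Fin 6), v) ∈ e → v = x ℓ := by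
  have hne : GSVert.left x hx ≠ GSVert.edge e he h1 h2 := nofun
  rw [gsGraph_adj_iff, and_iff_right hne]
  exact dist_Xpt_Ept_le_one_iff hinj

/-- In `G_S`, a left-half center `X (x₁,x₂,x₃)` and an edge center
`E (v_i,v_j,v_k)` are adjacent iff `v_ℓ = x_ℓ` for every part `ℓ ∈ {1,2,3}` met by the
hyperedge. -/
theorem gsGraph_equality_check (n : ℕ) (hn : 1 ≤ n) (E : Set (Finset (HypVert n)))
    (hE : WellFormed E)
    (x : Fin 3 → Fin n) (hx : tripleL x ∉ E)
    (e : Finset (HypVert n)) (he : e ∈ E)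
    (h1 : ¬ hparts e ⊆ ({0, 1, 2} : Finset (Fin 6)))
    (h2 : ¬ hparts e ⊆ ({3, 4, 5} : Finset (Fin 6))) :
    (gsGraph n E).Adj (GSVert.left x hx) (GSVert.edge e he h1 h2) ↔
      ∀ (ℓ : Fin 3) (v : Fin n),
        ((⟨(ℓ : ℕ), by have := ℓ.isLt; omega⟩ : Fin 6), v) ∈ e → v = x ℓ :=
  gsGraph_equality_check_general hx he (hE.injOn_fst he) h1 h2
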